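/- Let G be a 2-connected finite simple graph. Then G satisfies the equalities (♠)_2 (namely |E| = 2(|V|−1) and |E(S)| = 2|S|−3 for every good flat S) if and only if G can be obtained from the complete graph K4 by a finite sequence of collisions, where the collision of two graphs on chosen corresponding edges is obtained by identifying the two chosen edges (with their endpoints) and then deleting the identified edge. -/

import Mathlib

/-!
Call `S` proper if `S ≠ V`. In a `2`-connected graph `G`, a set `S` is a good flat exactly when
`G[S]` is `2`-connected and `G[Sᶜ]` is connected (`isGoodFlat_iff`). The key fact is that (♠)₂
upgrades to an inequality: `|E(S)| ≤ 2|S| - 3` for *every* proper `S` with `|S| ≥ 2`, with equality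
only for good flats. This is shown first for sets with connected complement, by splitting at cut
vertices (`sparse_aux`), and then in general, by splitting a disconnected complement (`sparse`).

Suppose `G` satisfies (♠)₂. If some pair `{a, b}` separates `G` into sides `A` and `B`, counting
edges against the sparsity bounds shows that `a` and `b` are nonadjacent and that `A` and `B` are
good flats (`exists_sep`). Hence `G` is the collision of `G[A] + ab` and `G[B] + ab`, which are
smaller and satisfy (♠)₂ again (`Sep.spade_left`). If no pair separates `G`, the complement of every
vertex is a good flat, so `G` is cubic; then `3n = 4(n - 1)`, so `n = 4` and `G` is `K₄`
(`iso_of_threeConn`).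

Conversely `K₄` satisfies (♠)₂, and collisions preserve (♠)₂ (`Sep.spade`): a good flat of the
collision restricts to a good flat of one of the two graphs, and the equality transfers.
-/

open SimpleGraph
open scoped Pointwise

namespace Gor

/-! ### Graph-theoretic notions -/

/-- A graph is `2`-connected if it is connected and remains connected after deletion of any
single vertex.  A single edge `K₂` counts as `2`-connected. -/
def IsTwoConnected {V : Type*} (G : SimpleGraph V) : Prop :=
  G.Connected ∧ ∀ v : V, (G.induce {u : V | u ≠ v}).Connected

/-- `E(S)`: the set of edges of `G` with both endpoints in `S`. -/
def edgesIn {V : Type*} (G : SimpleGraph V) (S : Set V) : Set (Sym2 V) :=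
  {e ∈ G.edgeSet | ∀ v ∈ e, v ∈ S}

/-- The simple graph obtained from `G` by contracting all edges in `F`: its vertices are the
connected components of the graph with edge set `F`, two being adjacent if some edge of `G`
joins them. -/
def contractEdges {V : Type*} (G : SimpleGraph V) (F : Set (Sym2 V)) :
    SimpleGraph (SimpleGraph.fromEdgeSet F).ConnectedComponent :=
  SimpleGraph.fromRel fun c d => ∃ u v : V, G.Adj u v ∧
    (SimpleGraph.fromEdgeSet F).connectedComponentMk u = c ∧
    (SimpleGraph.fromEdgeSet F).connectedComponentMk v = d

/-- `S` is a good flat of `G`: the induced subgraph `G[S]` is `2`-connected and the contraction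
of all edges of `E(S)` in `G` is `2`-connected. -/
def IsGoodFlat {V : Type*} (G : SimpleGraph V) (S : Set V) : Prop :=
  IsTwoConnected (G.induce S) ∧ IsTwoConnected (contractEdges G (edgesIn G S))

/-- The weight function `w : E → {1, δ-1}` with `w e = 1` whenever `G∖e` is `2`-connected and
`w e = δ - 1` whenever `G/e` is `2`-connected. -/
def IsCanonicalWeight {V : Type*} (G : SimpleGraph V) (δ : ℕ) (w : Sym2 V → ℕ) : Prop :=
  (∀ e ∈ G.edgeSet, w e = 1 ∨ w e = δ - 1) ∧
  (∀ e ∈ G.edgeSet, IsTwoConnected (G.deleteEdges {e}) → w e = 1) ∧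
  (∀ e ∈ G.edgeSet, IsTwoConnected (contractEdges G {e}) → w e = δ - 1)

/-- A `2`-connected graph `G` satisfies `(♠)_δ` via the weight function `w`. -/
def SatisfiesSpade {V : Type*} (G : SimpleGraph V) (δ : ℕ) (w : Sym2 V → ℕ) : Prop :=
  IsTwoConnected G ∧ IsCanonicalWeight G δ w ∧
  (∑ᶠ e ∈ G.edgeSet, w e) = δ * (Nat.card V - 1) ∧
  ∀ S : Set V, IsGoodFlat G S → (∑ᶠ e ∈ edgesIn G S, w e) + 1 = δ * (S.ncard - 1)

/-- The number of `2`-connected components (blocks) of a graph: the number of inclusion-maximal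
vertex subsets inducing a `2`-connected subgraph. -/
noncomputable def numBlocks {V : Type*} (G : SimpleGraph V) : ℕ :=
  {S : Set V | IsTwoConnected (G.induce S) ∧
    ∀ T : Set V, S ⊆ T → IsTwoConnected (G.induce T) → S = T}.ncard

/-! ### Lattice polytopes and the Gorenstein property -/

/-- A point of `ℝ^η` is a lattice point if all its coordinates are integers. -/
def IsLatticePoint {η : Type*} (x : η → ℝ) : Prop := ∀ i, ∃ z : ℤ, x i = z

/-- The cone over a polytope `P ⊆ ℝ^η`, living in `ℝ^η × ℝ`. -/
def coneOver {η : Type*} (P : Set (η → ℝ)) : Set ((η → ℝ) × ℝ) :=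
  {y | ∃ t : ℝ, ∃ p ∈ P, 0 ≤ t ∧ y = (t • p, t)}

/-- The lattice affinely spanned by the lattice points of `P`, placed at height one;
i.e. the subgroup of `ℝ^η × ℝ` generated by `{(p, 1) : p a lattice point of P}`. -/
def coneLattice {η : Type*} (P : Set (η → ℝ)) : Submodule ℤ ((η → ℝ) × ℝ) :=
  Submodule.span ℤ {y | ∃ p ∈ P, IsLatticePoint p ∧ y = (p, 1)}

/-- `h` is a linear form cutting out a facet-supporting hyperplane of the cone over `P`:
it is nonnegative on the cone and vanishes on a subset of the cone spanning one dimension less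
than the cone itself. -/
def IsFacetForm {η : Type*} (P : Set (η → ℝ)) (h : ((η → ℝ) × ℝ) →ₗ[ℝ] ℝ) : Prop :=
  (∀ y ∈ coneOver P, 0 ≤ h y) ∧
  Module.finrank ℝ (Submodule.span ℝ {y ∈ coneOver P | h y = 0}) + 1 =
    Module.finrank ℝ (Submodule.span ℝ (coneOver P))

/-- `h` is reduced with respect to the lattice spanned by `P`: it takes integer values on the
lattice and attains the value `1` there. -/
def IsReducedForm {η : Type*} (P : Set (η → ℝ)) (h : ((η → ℝ) × ℝ) →ₗ[ℝ] ℝ) : Prop :=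
  (∀ y ∈ coneLattice P, ∃ z : ℤ, h y = z) ∧ ∃ y ∈ coneLattice P, h y = 1

/-- A polytope `P`, regarded as full-dimensional in the affine lattice it spans, is
`δ`-Gorenstein if there is a lattice point `v ∈ δP` with `h (v, δ) = 1` for the reduced
equation `h` of every facet-supporting hyperplane of the cone over `P`. -/
def IsDeltaGorenstein {η : Type*} (P : Set (η → ℝ)) (δ : ℕ) : Prop :=
  ∃ v : η → ℝ, v ∈ (δ : ℝ) • P ∧ (v, (δ : ℝ)) ∈ coneLattice P ∧
    ∀ h : ((η → ℝ) × ℝ) →ₗ[ℝ] ℝ, IsFacetForm P h → IsReducedForm P h → h (v, (δ : ℝ)) = 1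

/-- A polytope is Gorenstein if it is `δ`-Gorenstein for some positive integer `δ`. -/
def IsGorenstein {η : Type*} (P : Set (η → ℝ)) : Prop :=
  ∃ δ : ℕ, 0 < δ ∧ IsDeltaGorenstein P δ

/-! ### Graphic matroids of simple graphs and their polytopes -/

/-- An independent set of the graphic matroid of `G`: a set of edges forming a forest. -/
def IsGraphicIndep {V : Type*} (G : SimpleGraph V) (I : Set (Sym2 V)) : Prop :=
  I ⊆ G.edgeSet ∧ (SimpleGraph.fromEdgeSet I).IsAcyclic

/-- A basis of the graphic matroid of `G`: a maximal forest (spanning forest). -/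
def IsGraphicBasis {V : Type*} (G : SimpleGraph V) (B : Set (Sym2 V)) : Prop :=
  IsGraphicIndep G B ∧ ∀ e ∈ G.edgeSet, e ∉ B → ¬ IsGraphicIndep G (insert e B)

/-- The base polytope `B(M(G))` of the graphic matroid of `G`: the convex hull of the
indicator vectors of the bases. -/
def basePolytope {V : Type*} (G : SimpleGraph V) : Set (Sym2 V → ℝ) :=
  convexHull ℝ {x | ∃ B : Set (Sym2 V), IsGraphicBasis G B ∧
    x = B.indicator fun _ => (1 : ℝ)}

/-- The base polytope `B(M(G))`, regarded inside `ℝ^E` where `E` is the edge set of `G`. -/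
def basePolytopeE {V : Type*} (G : SimpleGraph V) : Set (↥G.edgeSet → ℝ) :=
  convexHull ℝ {x | ∃ B : Set (Sym2 V), IsGraphicBasis G B ∧
    x = (Subtype.val ⁻¹' B).indicator fun _ => (1 : ℝ)}

/-- A homogeneous inequality `g x ≥ 0` is valid for `P` and defines a facet (a supporting
hyperplane whose intersection with `P` has affine dimension one less than `P`). -/
def IsSupportingFaceIneq {α : Type*} (P : Set (α → ℝ)) (g : (α → ℝ) → ℝ) : Prop :=
  (∀ x ∈ P, 0 ≤ g x) ∧
  Module.finrank ℝ (vectorSpan ℝ {x ∈ P | g x = 0}) + 1 =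
    Module.finrank ℝ (vectorSpan ℝ P)

/-! ### Multigraphs -/

/-- A finite undirected loopless multigraph on a vertex type `V` with edge type `E`. -/
structure Multigraph (V E : Type*) where
  ends : E → Sym2 V
  loopless : ∀ e, ¬ (ends e).IsDiag

/-- The underlying simple graph of a multigraph. -/
def Multigraph.toSimple {V E : Type*} (G : Multigraph V E) : SimpleGraph V :=
  SimpleGraph.fromEdgeSet (Set.range G.ends)

/-- `E(S)` for a multigraph: the set of edges with both endpoints in `S`. -/
def Multigraph.edgesIn {V E : Type*} (G : Multigraph V E) (S : Set V) : Set E :=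
  {e | ∀ v ∈ G.ends e, v ∈ S}

/-- A set of edges of a multigraph is a forest (an independent set of the graphic matroid):
no two parallel edges and no cycle. -/
def IsMultiForest {V E : Type*} (G : Multigraph V E) (I : Set E) : Prop :=
  Set.InjOn G.ends I ∧ (SimpleGraph.fromEdgeSet (G.ends '' I)).IsAcyclic

/-- The independence polytope `P(M(G))` of the graphic matroid of a multigraph `G`. -/
def multiIndepPolytope {V E : Type*} (G : Multigraph V E) : Set (E → ℝ) :=
  convexHull ℝ {x | ∃ I : Set E, IsMultiForest G I ∧ x = I.indicator fun _ => (1 : ℝ)}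

/-- The rank of a set of edges in the graphic matroid of a multigraph. -/
noncomputable def mrank {V E : Type*} (G : Multigraph V E) (A : Set E) : ℕ :=
  sSup {n | ∃ I ⊆ A, IsMultiForest G I ∧ I.ncard = n}

/-- A flat of the graphic matroid of a multigraph: adding any further edge increases the rank. -/
def IsGraphicFlat {V E : Type*} (G : Multigraph V E) (A : Set E) : Prop :=
  ∀ e : E, e ∉ A → mrank G (insert e A) ≠ mrank G A

/-- A circuit of the graphic matroid of a multigraph: a minimal dependent set of edges. -/
def IsMultiCircuit {V E : Type*} (G : Multigraph V E) (C : Set E) : Prop :=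
  ¬ IsMultiForest G C ∧ ∀ C' ⊂ C, IsMultiForest G C'

/-- The restriction of the graphic matroid of `G` to `A` is a connected matroid:
`A` is nonempty and any two distinct elements of `A` lie on a common circuit inside `A`. -/
def ConnectedRestriction {V E : Type*} (G : Multigraph V E) (A : Set E) : Prop :=
  A.Nonempty ∧ ∀ e ∈ A, ∀ f ∈ A, e ≠ f → ∃ C ⊆ A, IsMultiCircuit G C ∧ e ∈ C ∧ f ∈ C

/-- `G` is the `m`-blow-up of the simple graph `H`: every edge of `H` is replaced by exactly
`m` parallel edges and there are no other edges. -/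
def IsBlowUp {V E : Type*} (G : Multigraph V E) (m : ℕ) (H : SimpleGraph V) : Prop :=
  (∀ p ∈ H.edgeSet, {e : E | G.ends e = p}.ncard = m) ∧
  ∀ p : Sym2 V, p ∉ H.edgeSet → {e : E | G.ends e = p} = ∅

/-- The condition `(♣)_δ`: `(δ-1)|E(S)| + 1 = δ(|S|-1)` for every vertex subset `S` inducing a
`2`-connected subgraph. -/
def ClubCond {V : Type*} (H : SimpleGraph V) (δ : ℕ) : Prop :=
  ∀ S : Set V, IsTwoConnected (H.induce S) →
    (δ - 1) * (edgesIn H S).ncard + 1 = δ * (S.ncard - 1)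

/-! ### Chordality, `K₄` minors, cycle attachments -/

/-- A chordless cycle: a cycle such that every edge of `G` between vertices of the cycle is an
edge of the cycle. -/
def IsChordlessCycle {V : Type*} (G : SimpleGraph V) {v : V} (c : G.Walk v v) : Prop :=
  c.IsCycle ∧ ∀ e ∈ edgesIn G {u : V | u ∈ c.support}, e ∈ c.edges

/-- `G` is `δ`-chordal: every cycle without a chord has exactly `δ + 1` edges. -/
def IsDeltaChordal {V : Type*} (G : SimpleGraph V) (δ : ℕ) : Prop :=
  ∀ (v : V) (c : G.Walk v v), IsChordlessCycle G c → c.length = δ + 1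

/-- `G` has a `K₄` minor: there are four disjoint nonempty connected branch sets pairwise
joined by an edge. -/
def HasK4Minor {V : Type*} (G : SimpleGraph V) : Prop :=
  ∃ B : Fin 4 → Set V, (∀ i, (B i).Nonempty) ∧ (∀ i, (G.induce (B i)).Connected) ∧
    (Pairwise fun i j => Disjoint (B i) (B j)) ∧
    (Pairwise fun i j => ∃ u ∈ B i, ∃ v ∈ B j, G.Adj u v)

/-- One step of attaching a new `(δ+1)`-cycle to an edge: `B` is obtained from `A` by adding
`δ - 1` new vertices forming a path of length `δ` between the endpoints of an edge of
`H[A]`, these being all new edges. -/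
def AttachStep {V : Type*} (H : SimpleGraph V) (δ : ℕ) (A B : Set V) : Prop :=
  ∃ q : Fin (δ + 1) → V, Function.Injective q ∧
    H.Adj (q 0) (q (Fin.last δ)) ∧ q 0 ∈ A ∧ q (Fin.last δ) ∈ A ∧
    (∀ i : Fin (δ + 1), i ≠ 0 → i ≠ Fin.last δ → q i ∉ A) ∧
    B = A ∪ {x | ∃ i : Fin (δ + 1), i ≠ 0 ∧ i ≠ Fin.last δ ∧ q i = x} ∧
    edgesIn H B = edgesIn H A ∪ {e | ∃ i : Fin δ, e = s(q i.castSucc, q i.succ)}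

/-- `H` can be constructed from the clique `K₂` by repeatedly attaching new `(δ+1)`-cycles to
edges of the preceding graph. -/
def ConstructibleFromK2 {V : Type*} (H : SimpleGraph V) (δ : ℕ) : Prop :=
  ∃ (k : ℕ) (S : Fin (k + 1) → Set V),
    (∃ u v : V, H.Adj u v ∧ S 0 = {u, v}) ∧
    S (Fin.last k) = Set.univ ∧
    ∀ i : Fin k, AttachStep H δ (S i.castSucc) (S i.succ)

/-! ### Gluings, subdivisions, collisions, ears -/

/-- `G` (with distinguished edge `ab`) is the gluing of the graphs `Gs i` along the edges
`es i`: the disjoint union with all the edges `es i` identified to the single edge `ab`. -/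
def IsGluing {ι : Type*} {Vf : ι → Type*} {W : Type*} (Gs : ∀ i, SimpleGraph (Vf i))
    (es : ∀ i, Sym2 (Vf i)) (G : SimpleGraph W) (a b : W) : Prop :=
  a ≠ b ∧ G.Adj a b ∧
  ∃ φ : ∀ i, Vf i → W,
    (∀ i, Function.Injective (φ i)) ∧
    (∀ x : W, ∃ i, x ∈ Set.range (φ i)) ∧
    (∀ i, Sym2.map (φ i) (es i) = s(a, b)) ∧
    (∀ i j, i ≠ j → Set.range (φ i) ∩ Set.range (φ j) = {a, b}) ∧
    ∀ x y : W, G.Adj x y ↔ ∃ i, ∃ u v, (Gs i).Adj u v ∧ φ i u = x ∧ φ i v = y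

/-- `G'` together with the path `q` is the subdivision of `G` obtained by replacing the edge
`uv` by a path of `m` edges `q 0, …, q m` through new vertices. -/
def IsSubdivisionAt {V W : Type*} (G : SimpleGraph V) (u v : V) {m : ℕ}
    (G' : SimpleGraph W) (q : Fin (m + 1) → W) : Prop :=
  ∃ φ : V → W, Function.Injective φ ∧ Function.Injective q ∧
    q 0 = φ u ∧ q (Fin.last m) = φ v ∧
    (∀ i : Fin (m + 1), i ≠ 0 → i ≠ Fin.last m → q i ∉ Set.range φ) ∧
    (∀ x : W, x ∈ Set.range φ ∨ x ∈ Set.range q) ∧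
    ∀ x y : W, G'.Adj x y ↔
      ((∃ a b : V, G.Adj a b ∧ s(a, b) ≠ s(u, v) ∧ φ a = x ∧ φ b = y) ∨
       ∃ i : Fin m, s(x, y) = s(q i.castSucc, q i.succ))

/-- `G` (with the distinguished nonadjacent pair `a b`) is the collision of `G₁` and `G₂` on
the edges `e₁, e₂`: the disjoint union with `e₁` and `e₂` identified and then deleted. -/
def IsCollision {V₁ V₂ W : Type*} (G₁ : SimpleGraph V₁) (G₂ : SimpleGraph V₂)
    (e₁ : Sym2 V₁) (e₂ : Sym2 V₂) (G : SimpleGraph W) (a b : W) : Prop :=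
  a ≠ b ∧ ¬ G.Adj a b ∧
  ∃ (φ₁ : V₁ → W) (φ₂ : V₂ → W),
    Function.Injective φ₁ ∧ Function.Injective φ₂ ∧
    Sym2.map φ₁ e₁ = s(a, b) ∧ Sym2.map φ₂ e₂ = s(a, b) ∧
    (∀ x : W, x ∈ Set.range φ₁ ∨ x ∈ Set.range φ₂) ∧
    Set.range φ₁ ∩ Set.range φ₂ = {a, b} ∧
    ∀ x y : W, G.Adj x y ↔
      ((∃ u v, G₁.Adj u v ∧ s(u, v) ≠ e₁ ∧ φ₁ u = x ∧ φ₁ v = y) ∨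
       (∃ u v, G₂.Adj u v ∧ s(u, v) ≠ e₂ ∧ φ₂ u = x ∧ φ₂ v = y))

/-- The inner vertices of an ear. -/
def earInner {V : Type*} {s : ℕ} (p : Fin (s + 1) → V) : Set V :=
  {x | ∃ i : Fin (s + 1), i ≠ 0 ∧ i ≠ Fin.last s ∧ p i = x}

/-- The edges of an ear. -/
def earEdges {V : Type*} {s : ℕ} (p : Fin (s + 1) → V) : Set (Sym2 V) :=
  {e | ∃ i : Fin s, e = s(p i.castSucc, p i.succ)}

/-- An `s`-ear of `G`: a path with `s` edges whose inner vertices have degree `2` in `G`. -/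
def IsEar {V : Type*} (G : SimpleGraph V) {s : ℕ} (p : Fin (s + 1) → V) : Prop :=
  Function.Injective p ∧ (∀ i : Fin s, G.Adj (p i.castSucc) (p i.succ)) ∧
  ∀ i : Fin (s + 1), i ≠ 0 → i ≠ Fin.last s → (G.neighborSet (p i)).ncard = 2

/-- `T` is the vertex set of an inclusion-maximal proper `2`-connected induced subgraph. -/
def IsMaxProperTwoConnected {V : Type*} (G : SimpleGraph V) (T : Set V) : Prop :=
  IsTwoConnected (G.induce T) ∧ T ≠ Set.univ ∧
  ∀ T' : Set V, T ⊆ T' → T' ≠ Set.univ → IsTwoConnected (G.induce T') → T' = T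

/-! ### `(♠)₂` and `3`-connectivity -/

/-- A `2`-connected graph satisfies the equalities `(♠)₂`:
`|E| = 2(|V|-1)` and `|E(S)| = 2|S| - 3` for every good flat `S`. -/
def Spade2 {V : Type*} (G : SimpleGraph V) : Prop :=
  IsTwoConnected G ∧ G.edgeSet.ncard = 2 * (Nat.card V - 1) ∧
  ∀ S : Set V, IsGoodFlat G S → (edgesIn G S).ncard = 2 * S.ncard - 3

/-- A graph is `3`-connected if it has more than `3` vertices and remains connected after
deletion of any two vertices. -/
def IsThreeConnected {V : Type*} (G : SimpleGraph V) : Prop :=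
  3 < Nat.card V ∧ ∀ u v : V, (G.induce {x : V | x ≠ u ∧ x ≠ v}).Connected

/-! ### Inductive constructions -/

/-- Graphs obtainable from the `δ`-cycle by gluings (Proposition `construction1`) and
`(δ-1)`-subdivisions (Proposition `construction2`). -/
inductive Obtainable (δ : ℕ) : {W : Type} → SimpleGraph W → Prop
  | cycle {W : Type} (G : SimpleGraph W) (e : G ≃g SimpleGraph.cycleGraph δ) :
      Obtainable δ G
  | glue {Vf : Fin (δ - 1) → Type} {W : Type}
      (Gs : ∀ i, SimpleGraph (Vf i)) (ws : ∀ i, Sym2 (Vf i) → ℕ) (es : ∀ i, Sym2 (Vf i))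
      (G : SimpleGraph W) (a b : W)
      (hob : ∀ i, Obtainable δ (Gs i))
      (hsp : ∀ i, SatisfiesSpade (Gs i) δ (ws i))
      (hes : ∀ i, es i ∈ (Gs i).edgeSet)
      (hwe : ∀ i, ws i (es i) = δ - 1)
      (hgl : IsGluing Gs es G a b) : Obtainable δ G
  | subdivide {V W : Type} (G : SimpleGraph V) (w : Sym2 V → ℕ) (u v : V)
      (G' : SimpleGraph W) (q : Fin (δ - 1 + 1) → W)
      (hob : Obtainable δ G) (hsp : SatisfiesSpade G δ w)
      (huv : G.Adj u v) (hw1 : w s(u, v) = 1)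
      (hsub : IsSubdivisionAt G u v G' q) : Obtainable δ G'

/-- Graphs obtainable from the clique `K₄` by a finite sequence of collisions. -/
inductive ObtainableK4 : {W : Type} → SimpleGraph W → Prop
  | k4 {W : Type} (G : SimpleGraph W) (e : G ≃g (⊤ : SimpleGraph (Fin 4))) :
      ObtainableK4 G
  | collide {V₁ V₂ W : Type} (G₁ : SimpleGraph V₁) (G₂ : SimpleGraph V₂)
      (e₁ : Sym2 V₁) (e₂ : Sym2 V₂) (G : SimpleGraph W) (a b : W)
      (h₁ : ObtainableK4 G₁) (h₂ : ObtainableK4 G₂)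
      (he₁ : e₁ ∈ G₁.edgeSet) (he₂ : e₂ ∈ G₂.edgeSet)
      (hc : IsCollision G₁ G₂ e₁ e₂ G a b) : ObtainableK4 G

/-! ### Connectivity of vertex subsets -/

/-- `G[X]` is connected. Stated through invariant predicates: `X` is nonempty and a predicate that
propagates along the edges of `G[X]` propagates over all of `X`. In this form no subtypes of
vertices appear. -/
def Conn {V : Type*} (G : SimpleGraph V) (X : Set V) : Prop :=
  X.Nonempty ∧ ∀ f : V → Prop, (∀ u ∈ X, ∀ v ∈ X, G.Adj u v → f u → f v) →
    ∀ u ∈ X, ∀ v ∈ X, f u → f v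

/-- `G[X]` is `2`-connected, in terms of `Conn`. -/
def TwoConn {V : Type*} (G : SimpleGraph V) (X : Set V) : Prop :=
  Conn G X ∧ ∀ v ∈ X, Conn G (X \ {v})

theorem connected_iff_conn_univ {V : Type*} (G : SimpleGraph V) :
    G.Connected ↔ Conn G Set.univ := by
  constructor
  · intro h
    refine ⟨Set.nonempty_iff_univ_nonempty.1 h.nonempty, fun f hf u _ v _ hu => ?_⟩
    obtain ⟨p⟩ := h.preconnected u v
    induction p with
    | nil => exact hu
    | cons hadj p ih => exact ih trivial trivial (hf _ trivial _ trivial hadj hu)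
  · rintro ⟨⟨x, _⟩, h⟩
    have : Nonempty V := ⟨x⟩
    refine ⟨fun u v => ?_⟩
    exact h (fun w => G.Reachable u w) (fun y _ z _ hyz hy => hy.trans hyz.reachable)
      u trivial v trivial (Reachable.refl u)

theorem conn_image {V W : Type*} {G : SimpleGraph V} {H : SimpleGraph W} (φ : V → W)
    (hφ : Function.Injective φ) (hadj : ∀ u v, H.Adj (φ u) (φ v) ↔ G.Adj u v) (X : Set V) :
    Conn H (φ '' X) ↔ Conn G X := by
  constructor
  · rintro ⟨hne, h⟩
    refine ⟨Set.image_nonempty.1 hne, fun f hf u hu v hv hfu => ?_⟩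
    obtain ⟨w, hw, hfw⟩ := h (fun w => ∃ x, φ x = w ∧ f x) (by
      rintro _ ⟨x, hx, rfl⟩ _ ⟨y, hy, rfl⟩ hxy ⟨x', hx', hf'⟩
      rw [hφ hx'] at hf'
      exact ⟨y, rfl, hf x hx y hy ((hadj _ _).1 hxy) hf'⟩)
      (φ u) ⟨u, hu, rfl⟩ (φ v) ⟨v, hv, rfl⟩ ⟨u, rfl, hfu⟩
    rwa [← hφ hw]
  · rintro ⟨hne, h⟩
    refine ⟨hne.image _, ?_⟩
    rintro f hf _ ⟨u, hu, rfl⟩ _ ⟨v, hv, rfl⟩ hfu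
    exact h (fun x => f (φ x)) (fun x hx y hy hxy hfx =>
      hf _ ⟨x, hx, rfl⟩ _ ⟨y, hy, rfl⟩ ((hadj _ _).2 hxy) hfx) u hu v hv hfu

theorem twoConn_image {V W : Type*} {G : SimpleGraph V} {H : SimpleGraph W} (φ : V → W)
    (hφ : Function.Injective φ) (hadj : ∀ u v, H.Adj (φ u) (φ v) ↔ G.Adj u v) (X : Set V) :
    TwoConn H (φ '' X) ↔ TwoConn G X := by
  have h (v : V) : φ '' X \ {φ v} = φ '' (X \ {v}) := by
    rw [Set.image_sdiff hφ, Set.image_singleton]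
  simp only [TwoConn, conn_image φ hφ hadj, Set.forall_mem_image, h]

theorem induce_connected_iff {V : Type*} (G : SimpleGraph V) (X : Set V) :
    (G.induce X).Connected ↔ Conn G X := by
  rw [connected_iff_conn_univ, ← conn_image (H := G) Subtype.val Subtype.val_injective
    (fun _ _ => Iff.rfl)]
  simp

theorem isTwoConnected_iff {V : Type*} (G : SimpleGraph V) :
    IsTwoConnected G ↔ TwoConn G Set.univ := by
  have h (v : V) : {u : V | u ≠ v} = Set.univ \ {v} := by ext; simp
  simp only [IsTwoConnected, TwoConn, connected_iff_conn_univ G, induce_connected_iff, h,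
    Set.mem_univ, forall_const]

theorem isTwoConnected_induce_iff {V : Type*} (G : SimpleGraph V) (X : Set V) :
    IsTwoConnected (G.induce X) ↔ TwoConn G X := by
  rw [isTwoConnected_iff, ← twoConn_image (H := G) Subtype.val Subtype.val_injective
    (fun _ _ => Iff.rfl)]
  simp

/-- A set of vertices of a contraction is connected exactly when its preimage is, since the fibres
of the contraction map are connected. -/
theorem conn_contract_iff {V : Type*} {G : SimpleGraph V} {F : Set (Sym2 V)}
    (hF : F ⊆ G.edgeSet) {X : Set (SimpleGraph.fromEdgeSet F).ConnectedComponent} :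
    Conn (contractEdges G F) X ↔
      Conn G ((SimpleGraph.fromEdgeSet F).connectedComponentMk ⁻¹' X) := by
  set π := (SimpleGraph.fromEdgeSet F).connectedComponentMk with hπ
  have hsurj : Function.Surjective π := fun c => c.exists_rep
  constructor
  · rintro ⟨⟨c, hc⟩, h⟩
    obtain ⟨x, rfl⟩ := hsurj c
    refine ⟨⟨x, hc⟩, fun g hg u hu v hv hgu => ?_⟩
    have fiber (x y : V) (hxy : π x = π y) (hx : π x ∈ X) (hgx : g x) : g y := by
      obtain ⟨p⟩ := ConnectedComponent.exact hxy
      induction p with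
      | nil => exact hgx
      | @cons x z y hadj p ih =>
        have hxz : π x = π z := ConnectedComponent.sound hadj.reachable
        refine ih (hxz ▸ hxy) (hxz ▸ hx) (hg x hx z (show π z ∈ X from hxz ▸ hx) ?_ hgx)
        exact hF ((fromEdgeSet_adj F).1 hadj).1
    obtain ⟨w, hw, hgw⟩ := h (fun c => ∃ x, π x = c ∧ g x) (by
      rintro c hc d hd hcd ⟨x, rfl, hgx⟩
      obtain ⟨-, ⟨y, z, hyz, hy, hz⟩ | ⟨y, z, hyz, hy, hz⟩⟩ := (fromRel_adj _ _ _).1 hcd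
      · exact ⟨z, hz, hg y (show π y ∈ X from (show π y = π x from hy) ▸ hc) z
          (show π z ∈ X from (show π z = d from hz) ▸ hd) hyz
          (fiber x y hy.symm hc hgx)⟩
      · exact ⟨y, hy, hg z (show π z ∈ X from (show π z = π x from hz) ▸ hc) y
          (show π y ∈ X from (show π y = d from hy) ▸ hd) hyz.symm
          (fiber x z hz.symm hc hgx)⟩) (π u) hu (π v) hv ⟨u, rfl, hgu⟩
    exact fiber w v hw (hw ▸ hv) hgw
  · rintro ⟨⟨x, hx⟩, h⟩
    refine ⟨⟨π x, hx⟩, fun f hf c hc d hd => ?_⟩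
    obtain ⟨u, rfl⟩ := hsurj c
    obtain ⟨v, rfl⟩ := hsurj d
    refine h (fun x => f (π x)) (fun y hy z hz hyz hfy => ?_) u hc v hd
    by_cases hne : π y = π z
    · exact hne ▸ hfy
    · exact hf _ hy _ hz ((fromRel_adj _ _ _).2 ⟨hne, Or.inl ⟨y, z, hyz, rfl, rfl⟩⟩) hfy

/-- Contracting `E(S)` for connected `S` identifies the vertices of `S` with each other, and
nothing else. -/
theorem mk_eq_iff {V : Type*} {G : SimpleGraph V} {S : Set V} (hS : Conn G S) (u v : V) :
    (SimpleGraph.fromEdgeSet (edgesIn G S)).connectedComponentMk u =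
      (SimpleGraph.fromEdgeSet (edgesIn G S)).connectedComponentMk v ↔
      u = v ∨ (u ∈ S ∧ v ∈ S) := by
  rw [ConnectedComponent.eq]
  constructor
  · rintro ⟨p⟩
    induction p with
    | nil => exact Or.inl rfl
    | cons h p ih =>
      simp only [fromEdgeSet_adj, edgesIn, Set.mem_ofPred_eq, Sym2.mem_iff, forall_eq_or_imp,
        forall_eq] at h
      rcases ih with rfl | ih
      · exact Or.inr h.1.2
      · exact Or.inr ⟨h.1.2.1, ih.2⟩
  · rintro (rfl | ⟨hu, hv⟩)
    · rfl
    · refine hS.2 (fun w => (SimpleGraph.fromEdgeSet (edgesIn G S)).Reachable u w)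
        (fun x hx y hy hxy h => h.trans (Adj.reachable ?_)) u hu v hv (Reachable.refl u)
      simp [edgesIn, hx, hy, hxy, hxy.ne]

/-- In a `2`-connected graph, `S` is a good flat iff `G[S]` is `2`-connected and the complement of
`S` is connected: deleting the contracted vertex leaves `G[Sᶜ]`, and no other deletion can
disconnect the contraction. -/
theorem isGoodFlat_iff {V : Type*} {G : SimpleGraph V} (hG : IsTwoConnected G) (S : Set V) :
    IsGoodFlat G S ↔ TwoConn G S ∧ Conn G Sᶜ := by
  rw [isTwoConnected_iff] at hG
  rw [IsGoodFlat, isTwoConnected_induce_iff, isTwoConnected_iff]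
  refine and_congr_right fun hS => ?_
  have hF : edgesIn G S ⊆ G.edgeSet := fun e he => he.1
  obtain ⟨s, hs⟩ := hS.1.1
  have key (v : V) : Conn (contractEdges G (edgesIn G S)) (Set.univ \
      {(SimpleGraph.fromEdgeSet (edgesIn G S)).connectedComponentMk v}) ↔
      Conn G {u | ¬ (u = v ∨ (u ∈ S ∧ v ∈ S))} := by
    rw [conn_contract_iff hF]
    simp only [← mk_eq_iff hS.1]
    congr!
    ext; simp
  have hSc : {u | ¬ (u = s ∨ (u ∈ S ∧ s ∈ S))} = Sᶜ := by
    ext u; simp only [Set.mem_ofPred_eq, Set.mem_compl_iff]; grind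
  constructor
  · intro h
    have := (key s).1 (h.2 _ trivial)
    rwa [hSc] at this
  · intro h
    refine ⟨?_, fun c _ => ?_⟩
    · rw [conn_contract_iff hF]; simpa using hG.1
    · induction c using ConnectedComponent.ind with | _ v
      rw [key]
      by_cases hv : v ∈ S
      · convert h using 1
        ext u; simp only [Set.mem_ofPred_eq, Set.mem_compl_iff]; grind
      · convert hG.2 v trivial using 1
        ext u; simp [hv]

/-! ### Counting edges, and (♠)₂ on a vertex subset -/

/-- The number `|E(S)|`. -/
noncomputable def eN {V : Type*} (G : SimpleGraph V) (S : Set V) : ℕ := (edgesIn G S).ncard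

/-- The induced subgraph `G[A]` satisfies (♠)₂. Good flats are described as in `isGoodFlat_iff`,
and the equalities are written without subtraction. -/
def SpadeOn {V : Type*} (G : SimpleGraph V) (A : Set V) : Prop :=
  TwoConn G A ∧ eN G A + 2 = 2 * A.ncard ∧
  ∀ S ⊆ A, TwoConn G S → Conn G (A \ S) → eN G S + 3 = 2 * S.ncard

theorem TwoConn.two_le {V : Type*} [Finite V] {G : SimpleGraph V} {X : Set V}
    (h : TwoConn G X) : 2 ≤ X.ncard := by
  obtain ⟨x, hx⟩ := h.1.1
  obtain ⟨y, hy, hyx⟩ := (h.2 x hx).1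
  exact (Set.one_lt_ncard).2 ⟨x, hx, y, hy, fun h => hyx h.symm⟩

theorem eN_image {V W : Type*} {G : SimpleGraph V} {H : SimpleGraph W} (φ : V → W)
    (hφ : Function.Injective φ) (hadj : ∀ u v, H.Adj (φ u) (φ v) ↔ G.Adj u v) (X : Set V) :
    eN H (φ '' X) = eN G X := by
  have : edgesIn H (φ '' X) = Sym2.map φ '' edgesIn G X := by
    ext e
    constructor
    · induction e using Sym2.ind with | _ x y
      rintro ⟨he, hX⟩
      obtain ⟨u, hu, rfl⟩ := hX x (by simp)
      obtain ⟨v, hv, rfl⟩ := hX y (by simp)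
      exact ⟨s(u, v), ⟨(hadj u v).1 he, by simp [hu, hv]⟩, rfl⟩
    · rintro ⟨e, ⟨he, hX⟩, rfl⟩
      induction e using Sym2.ind with | _ u v
      refine ⟨(hadj u v).2 he, ?_⟩
      simp at hX ⊢
      exact ⟨⟨u, hX.1, rfl⟩, ⟨v, hX.2, rfl⟩⟩
  rw [eN, this, Set.ncard_image_of_injective _ (Sym2.map.injective hφ), eN]

/-- `Spade2` is `SpadeOn` for the image of any embedding as an induced subgraph, so it can be
handled inside one ambient vertex type. -/
theorem spade2_iff {V W : Type*} [Finite V] {G : SimpleGraph V} {H : SimpleGraph W} (φ : V → W)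
    (hφ : Function.Injective φ) (hadj : ∀ u v, H.Adj (φ u) (φ v) ↔ G.Adj u v) :
    Spade2 G ↔ SpadeOn H (Set.range φ) := by
  rw [Spade2, SpadeOn, ← Set.image_univ, twoConn_image φ hφ hadj, eN_image φ hφ hadj,
    Set.ncard_image_of_injective _ hφ, Set.ncard_univ, ← isTwoConnected_iff]
  refine and_congr_right fun h2 => and_congr ?_ ?_
  · have h := ((isTwoConnected_iff G).1 h2).two_le
    have : edgesIn G Set.univ = G.edgeSet := by ext; simp [edgesIn]
    rw [Set.ncard_univ] at h
    rw [eN, this]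
    omega
  · simp only [isGoodFlat_iff h2]
    constructor
    · intro h S hS h1 h3
      obtain ⟨T, -, rfl⟩ := Set.subset_image_iff.1 hS
      rw [twoConn_image φ hφ hadj] at h1
      rw [← Set.image_sdiff hφ, conn_image φ hφ hadj, ← Set.compl_eq_univ_sdiff] at h3
      have := h T ⟨h1, h3⟩
      have := h1.two_le
      rw [eN_image φ hφ hadj, Set.ncard_image_of_injective _ hφ, eN]
      omega
    · intro h S ⟨h1, h3⟩
      have := h (φ '' S) (Set.image_mono (Set.subset_univ _))
        ((twoConn_image φ hφ hadj S).2 h1)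
        (by rwa [← Set.image_sdiff hφ, conn_image φ hφ hadj, ← Set.compl_eq_univ_sdiff])
      have := h1.two_le
      rw [eN_image φ hφ hadj, Set.ncard_image_of_injective _ hφ, eN] at *
      omega

/-- Modularity of `S ↦ |E(S)|` for two sets with no edge between `A \ B` and `B \ A`. -/
theorem eN_add {V : Type*} [Finite V] {G : SimpleGraph V} {A B : Set V}
    (h : ∀ u ∈ A, ∀ v ∈ B, G.Adj u v → v ∈ A ∨ u ∈ B) :
    eN G A + eN G B = eN G (A ∪ B) + eN G (A ∩ B) := by
  have h1 : edgesIn G A ∪ edgesIn G B = edgesIn G (A ∪ B) := by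
    ext e
    induction e using Sym2.ind with | _ x y
    have := h x
    have := h y
    have := G.adj_comm x y
    simp [edgesIn]
    grind
  have h2 : edgesIn G A ∩ edgesIn G B = edgesIn G (A ∩ B) := by
    ext e
    simp [edgesIn]
    grind
  rw [eN, eN, ← Set.ncard_union_add_ncard_inter _ _ (Set.toFinite _) (Set.toFinite _), h1, h2,
    eN, eN]

theorem eN_singleton {V : Type*} {G : SimpleGraph V} (v : V) : eN G {v} = 0 := by
  have : edgesIn G {v} = ∅ := by
    ext e
    induction e using Sym2.ind with | _ x y
    simp [edgesIn]
    rintro h rfl rfl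
    exact G.irrefl h
  rw [eN, this, Set.ncard_empty]

open Classical in
theorem eN_pair {V : Type*} {G : SimpleGraph V} {a b : V} (hab : a ≠ b) :
    eN G {a, b} = if G.Adj a b then 1 else 0 := by
  split_ifs with h
  · have : edgesIn G {a, b} = {s(a, b)} := by
      ext e
      induction e using Sym2.ind with | _ x y
      have := G.adj_comm x y
      have : ¬ G.Adj x x := G.irrefl
      simp [edgesIn]
      grind
    rw [eN, this, Set.ncard_singleton]
  · have : edgesIn G {a, b} = ∅ := by
      ext e
      induction e using Sym2.ind with | _ x y
      have := G.adj_comm x y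
      have : ¬ G.Adj x x := G.irrefl
      simp [edgesIn]
      grind
    rw [eN, this, Set.ncard_empty]

theorem twoConn_pair {V : Type*} {G : SimpleGraph V} {a b : V} (hab : G.Adj a b) :
    TwoConn G {a, b} := by
  have hs (v : V) : Conn G {v} := ⟨by simp, by simp⟩
  refine ⟨⟨by simp, fun f hf => ?_⟩, ?_⟩
  · have := hab.symm
    have := hf a (by simp) b (by simp)
    have := hf b (by simp) a (by simp)
    simp
    grind
  · intro v hv
    obtain rfl | rfl := hv
    · convert hs b using 1
      ext; have := hab.ne; grind
    · convert hs a using 1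
      ext; have := hab.ne; grind

/-- With at least three vertices, connectedness is implied by connectedness of all vertex-deleted
subgraphs: two given vertices survive the deletion of a third. -/
theorem TwoConn.of_three {V : Type*} [Finite V] {G : SimpleGraph V} {X : Set V}
    (h3 : 3 ≤ X.ncard) (h : ∀ v ∈ X, Conn G (X \ {v})) : TwoConn G X := by
  refine ⟨⟨Set.nonempty_of_ncard_ne_zero (by omega), fun f hf u hu v hv hfu => ?_⟩, h⟩
  have : ({u, v} : Set V).ncard ≤ 2 := by
    have := Set.ncard_insert_le u {v}
    simp at this; omega
  obtain ⟨w, hw, hw'⟩ := Set.exists_mem_notMem_of_ncard_lt_ncard (s := {u, v}) (t := X) (by omega)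
  simp at hw'
  exact (h w hw).2 f (fun x hx y hy => hf x hx.1 y hy.1) u (by grind) v (by grind) hfu

theorem exists_split {V : Type*} {G : SimpleGraph V} {X : Set V} (hne : X.Nonempty)
    (h : ¬ Conn G X) : ∃ Y Z : Set V, Y.Nonempty ∧ Z.Nonempty ∧ Y ∪ Z = X ∧ Disjoint Y Z ∧
      ∀ y ∈ Y, ∀ z ∈ Z, ¬ G.Adj y z := by
  simp only [Conn, hne, true_and] at h
  push Not at h
  obtain ⟨f, hf, u, hu, v, hv, hfu, hfv⟩ := h
  refine ⟨{x ∈ X | f x}, {x ∈ X | ¬ f x}, ⟨u, hu, hfu⟩, ⟨v, hv, hfv⟩, ?_, ?_, ?_⟩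
  · ext x; simp; tauto
  · rw [Set.disjoint_left]; intro x hx hx'; exact hx'.2 hx.2
  · intro y hy z hz hyz
    exact hz.2 (hf y hy.1 z hz.1 hyz hy.2)

/-! ### Sparsity -/

/-- Under (♠)₂, every `S` with at least two vertices and connected complement has
`|E(S)| ≤ 2|S| - 3`, with equality only if `G[S]` is `2`-connected. The induction on `|S|` splits a
non-`2`-connected `S` at a cut vertex `c`; both pieces again have connected complement, and their
bounds add up to `2|S| - 4`. -/
theorem sparse_aux {V : Type*} [Finite V] {G : SimpleGraph V} (hG : SpadeOn G Set.univ) (n : ℕ) :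
    ∀ S : Set V, S.ncard = n → 2 ≤ S.ncard → Conn G Sᶜ →
      eN G S + 3 ≤ 2 * S.ncard ∧ (eN G S + 3 = 2 * S.ncard → TwoConn G S) := by
  induction n using Nat.strong_induction_on with | _ n ih
  intro S hSn h2 hc
  by_cases hS : TwoConn G S
  · have := hG.2.2 S (Set.subset_univ _) hS (by rwa [← Set.compl_eq_univ_sdiff])
    exact ⟨this.le, fun _ => hS⟩
  suffices eN G S + 3 < 2 * S.ncard from ⟨this.le, fun h => absurd h this.ne⟩
  obtain h2' | h3 : S.ncard = 2 ∨ 3 ≤ S.ncard := by omega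
  · obtain ⟨a, b, hab, rfl⟩ := Set.ncard_eq_two.1 h2'
    have : ¬ G.Adj a b := fun h => hS (twoConn_pair h)
    rw [eN_pair hab, if_neg this]; omega
  obtain ⟨c, hcS, hcc⟩ : ∃ c ∈ S, ¬ Conn G (S \ {c}) := by
    by_contra! h
    exact hS (TwoConn.of_three h3 h)
  obtain ⟨Y, Z, ⟨y, hy⟩, ⟨z, hz⟩, hYZ, hd, hn⟩ := exists_split (by
    apply Set.nonempty_of_ncard_ne_zero
    rw [Set.ncard_sdiff_singleton_of_mem hcS]; omega) hcc
  have hcY : c ∉ Y := fun h => by have := hYZ.subset (Or.inl h); simp at this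
  have hcZ : c ∉ Z := fun h => by have := hYZ.subset (Or.inr h); simp at this
  have hS' : S = insert c (Y ∪ Z) := by rw [hYZ]; simp [hcS]
  -- Every component of `Z` sends an edge to `Sᶜ`, as otherwise `c` would be a cut vertex of `G`.
  have key : ∀ Y Z : Set V, Disjoint Y Z → (∀ y ∈ Y, ∀ z ∈ Z, ¬ G.Adj y z) → c ∉ Z →
      S = insert c (Y ∪ Z) → Conn G (insert c Y)ᶜ := by
    clear * - hc hG
    intro Y Z hd hn hcZ hS
    obtain ⟨⟨w, hw⟩, hc⟩ := hc
    have hZ' (x) : x ∈ Z → x ∉ Y := fun h h' => Set.disjoint_left.1 hd h' h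
    have hmem (x) : x ∈ (insert c Y)ᶜ ↔ x ∈ Sᶜ ∨ x ∈ Z := by
      have := hZ' x
      rw [hS]
      grind
    refine ⟨⟨w, (hmem w).2 (Or.inl hw)⟩, fun g hg => ?_⟩
    have hg' : ∀ u ∈ (insert c Y)ᶜ, ∀ v ∈ (insert c Y)ᶜ, G.Adj u v → (g u ↔ g v) :=
      fun u hu v hv huv => ⟨hg u hu v hv huv, hg v hv u hu huv.symm⟩
    have hc' : ∀ u ∈ Sᶜ, (g u ↔ g w) := fun u hu =>
      ⟨hc g (fun x hx y hy => hg x ((hmem x).2 (Or.inl hx)) y ((hmem y).2 (Or.inl hy))) u hu w hw,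
        hc g (fun x hx y hy => hg x ((hmem x).2 (Or.inl hx)) y ((hmem y).2 (Or.inl hy))) w hw u hu⟩
    suffices hZ : ∀ z ∈ Z, (g z ↔ g w) by
      have : ∀ u ∈ (insert c Y)ᶜ, (g u ↔ g w) := by
        intro u hu
        obtain h | h := (hmem u).1 hu
        · exact hc' u h
        · exact hZ u h
      intro u hu v hv
      rw [this u hu, this v hv]
      exact id
    intro z hz
    by_contra hgz
    have hwc : w ≠ c := by rintro rfl; exact hw (by simp [hS])
    -- The vertices of `Z` where `g` disagrees with `g w` are closed under adjacency in `G - c`,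
    -- which is connected and contains `w ∉ Z`.
    have := (hG.1.2 c trivial).2 (fun x => x ∈ Z ∧ ¬ (g x ↔ g w)) (by
      rintro x ⟨-, hx⟩ y ⟨-, hy⟩ hxy ⟨hxZ, hgx⟩
      have hyY : y ∉ Y := fun h => hn y h x hxZ hxy.symm
      have := hg' x ((hmem x).2 (Or.inr hxZ)) y (by simp at hy; simp [hy, hyY]) hxy
      obtain h | h := (hmem y).1 (by simp at hy; simp [hy, hyY])
      · exact absurd (this.trans (hc' y h)) hgx
      · exact ⟨h, by rwa [← this]⟩) z ⟨trivial, by rintro rfl; exact hcZ hz⟩ w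
        ⟨trivial, by simpa using hwc⟩ ⟨hz, hgz⟩
    exact this.2 Iff.rfl
  have c1 := key Y Z hd hn hcZ hS'
  have c2 := key Z Y hd.symm (fun y hy z hz h => hn z hz y hy h.symm) hcY
    (by rw [hS', Set.union_comm])
  have n0 : S.ncard = (Y ∪ Z).ncard + 1 := by
    rw [hS', Set.ncard_insert_of_notMem (by simp [hcY, hcZ])]
  rw [Set.ncard_union_eq hd] at n0
  have nY := Set.ncard_insert_of_notMem hcY
  have nZ := Set.ncard_insert_of_notMem hcZ
  have pY : 0 < Y.ncard := (Set.ncard_pos (Set.toFinite _)).2 ⟨y, hy⟩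
  have pZ : 0 < Z.ncard := (Set.ncard_pos (Set.toFinite _)).2 ⟨z, hz⟩
  have i1 := (ih _ (by omega) (insert c Y) rfl (by omega) c1).1
  have i2 := (ih _ (by omega) (insert c Z) rfl (by omega) c2).1
  have hadd := eN_add (G := G) (A := insert c Y) (B := insert c Z) (by
    intro u hu v hv huv
    have := hn u
    grind)
  rw [show insert c Y ∪ insert c Z = S by rw [hS']; grind,
    show insert c Y ∩ insert c Z = {c} by
      ext x; have := fun h : x ∈ Y => Set.disjoint_left.1 hd h; grind,
    eN_singleton] at hadd
  omega

/-- Under (♠)₂, every proper `S` with at least two vertices has `|E(S)| ≤ 2|S| - 3`, with equality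
only for good flats. If `Sᶜ` splits as `Y ∪ Z` without edges between `Y` and `Z`, then
`|E(S)| = |E(S ∪ Y)| + |E(S ∪ Z)| - |E|`, and the bounds for the larger sets `S ∪ Y`, `S ∪ Z`
give `|E(S)| ≤ 2|S| - 4`; hence the induction on `|Sᶜ|`. -/
theorem sparse {V : Type*} [Finite V] {G : SimpleGraph V} (hG : SpadeOn G Set.univ) (n : ℕ) :
    ∀ S : Set V, Sᶜ.ncard = n → S ≠ Set.univ → 2 ≤ S.ncard →
      eN G S + 3 ≤ 2 * S.ncard ∧ (eN G S + 3 = 2 * S.ncard → TwoConn G S ∧ Conn G Sᶜ) := by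
  induction n using Nat.strong_induction_on with | _ n ih
  intro S hSn hSu h2
  by_cases hc : Conn G Sᶜ
  · have := sparse_aux hG _ S rfl h2 hc
    exact ⟨this.1, fun h => ⟨this.2 h, hc⟩⟩
  suffices eN G S + 3 < 2 * S.ncard from ⟨this.le, fun h => absurd h this.ne⟩
  obtain ⟨Y, Z, ⟨y, hy⟩, ⟨z, hz⟩, hYZ, hd, hn⟩ := exists_split (by
    rw [Set.nonempty_compl]; exact hSu) hc
  have hSY : Disjoint S Y := by
    rw [Set.disjoint_left]; intro x hx hxY; exact hYZ.subset (Or.inl hxY) hx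
  have hSZ : Disjoint S Z := by
    rw [Set.disjoint_left]; intro x hx hxY; exact hYZ.subset (Or.inr hxY) hx
  have pY : 0 < Y.ncard := (Set.ncard_pos (Set.toFinite _)).2 ⟨y, hy⟩
  have pZ : 0 < Z.ncard := (Set.ncard_pos (Set.toFinite _)).2 ⟨z, hz⟩
  have e1 := Set.ncard_union_eq hSY
  have e2 := Set.ncard_union_eq hSZ
  have e3 := Set.ncard_union_eq hd
  rw [hYZ] at e3
  have e4 := Set.ncard_add_ncard_compl S
  have e5 := Set.ncard_add_ncard_compl (S ∪ Y)
  have e6 := Set.ncard_add_ncard_compl (S ∪ Z)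
  have i1 := (ih _ (by omega) (S ∪ Y) rfl (by
    intro h
    have := h.symm.subset (Set.mem_univ z)
    have := fun h : z ∈ Y => Set.disjoint_left.1 hd h
    have := fun h : z ∈ S => Set.disjoint_left.1 hSZ h; grind) (by omega)).1
  have i2 := (ih _ (by omega) (S ∪ Z) rfl (by
    intro h
    have := h.symm.subset (Set.mem_univ y)
    have := fun h : y ∈ Y => Set.disjoint_left.1 hd h
    have := fun h : y ∈ S => Set.disjoint_left.1 hSY h; grind) (by omega)).1
  have hadd := eN_add (G := G) (A := S ∪ Y) (B := S ∪ Z) (by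
    intro u hu v hv huv
    have := hn u
    grind)
  rw [show S ∪ Y ∪ (S ∪ Z) = Set.univ by
      rw [← Set.union_union_distrib_left, hYZ, Set.union_compl_self],
    show (S ∪ Y) ∩ (S ∪ Z) = S by
      ext x; have := fun h : x ∈ Y => Set.disjoint_left.1 hd h; grind] at hadd
  have := hG.2.1
  rw [Set.ncard_univ] at this
  omega

/-! ### Adding an edge -/

theorem conn_congr {V : Type*} {G H : SimpleGraph V} {X : Set V}
    (h : ∀ u ∈ X, ∀ v ∈ X, (G.Adj u v ↔ H.Adj u v)) : Conn G X ↔ Conn H X := by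
  refine and_congr_right fun _ => forall_congr' fun f => ?_
  refine imp_congr ⟨fun k u hu v hv huv => k u hu v hv ((h u hu v hv).2 huv),
    fun k u hu v hv huv => k u hu v hv ((h u hu v hv).1 huv)⟩ Iff.rfl

theorem twoConn_congr {V : Type*} {G H : SimpleGraph V} {X : Set V}
    (h : ∀ u ∈ X, ∀ v ∈ X, (G.Adj u v ↔ H.Adj u v)) : TwoConn G X ↔ TwoConn H X := by
  refine and_congr (conn_congr h) (forall₂_congr fun w _ => conn_congr fun u hu v hv => ?_)
  exact h u hu.1 v hv.1

theorem eN_congr {V : Type*} {G H : SimpleGraph V} {X : Set V}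
    (h : ∀ u ∈ X, ∀ v ∈ X, (G.Adj u v ↔ H.Adj u v)) : eN G X = eN H X := by
  have : edgesIn G X = edgesIn H X := by
    ext e
    induction e using Sym2.ind with | _ x y
    simp [edgesIn]
    grind
  rw [eN, this, eN]

theorem Conn.mono {V : Type*} {G H : SimpleGraph V} (hGH : G ≤ H) {X : Set V} (h : Conn G X) :
    Conn H X :=
  ⟨h.1, fun f hf => h.2 f fun u hu v hv huv => hf u hu v hv (hGH huv)⟩

theorem TwoConn.mono {V : Type*} {G H : SimpleGraph V} (hGH : G ≤ H) {X : Set V}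
    (h : TwoConn G X) : TwoConn H X :=
  ⟨h.1.mono hGH, fun v hv => (h.2 v hv).mono hGH⟩

theorem Conn.union {V : Type*} {G : SimpleGraph V} {X Y : Set V} (hX : Conn G X)
    (hY : Conn G Y) {c : V} (hcX : c ∈ X) (hcY : c ∈ Y) : Conn G (X ∪ Y) := by
  refine ⟨⟨c, Or.inl hcX⟩, fun f hf u hu v hv => ?_⟩
  have h1 := hX.2 f fun x hx y hy => hf x (Or.inl hx) y (Or.inl hy)
  have h2 := hY.2 f fun x hx y hy => hf x (Or.inr hx) y (Or.inr hy)
  have a1 : f u → f c := hu.elim (fun h => h1 u h c hcX) (fun h => h2 u h c hcY)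
  have a2 : f c → f v := hv.elim (fun h => h1 c hcX v h) (fun h => h2 c hcY v h)
  exact fun h => a2 (a1 h)

/-- `G` with the edge `ab` added. -/
def addE {V : Type*} (G : SimpleGraph V) (a b : V) : SimpleGraph V := G ⊔ SimpleGraph.edge a b

theorem le_addE {V : Type*} (G : SimpleGraph V) (a b : V) : G ≤ addE G a b := le_sup_left

theorem addE_adj {V : Type*} (G : SimpleGraph V) {a b : V} (hab : a ≠ b) (x y : V) :
    (addE G a b).Adj x y ↔ G.Adj x y ∨ (x = a ∧ y = b) ∨ (x = b ∧ y = a) := by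
  simp only [addE, sup_adj, edge_adj]
  grind

theorem addE_congr {V : Type*} (G : SimpleGraph V) {a b : V} (hab : a ≠ b) {X : Set V}
    (hX : ¬ (a ∈ X ∧ b ∈ X)) : ∀ u ∈ X, ∀ v ∈ X, (G.Adj u v ↔ (addE G a b).Adj u v) := by
  intro u hu v hv
  rw [addE_adj G hab]
  grind

theorem eN_addE {V : Type*} [Finite V] {G : SimpleGraph V} {a b : V} (hab : a ≠ b)
    (hn : ¬ G.Adj a b) {S : Set V} (ha : a ∈ S) (hb : b ∈ S) :
    eN (addE G a b) S = eN G S + 1 := by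
  have : edgesIn (addE G a b) S = insert s(a, b) (edgesIn G S) := by
    ext e
    induction e using Sym2.ind with | _ x y
    simp [edgesIn, addE_adj G hab]
    grind
  rw [eN, this, Set.ncard_insert_of_notMem (fun h => hn h.1) (Set.toFinite _), eN]

/-- If `X` is connected after adding `ab`, and `Y` is connected and contains `a` and `b`, then a path
inside `Y` replaces the edge `ab`, so that `X ∪ Y` is connected. -/
theorem Conn.union' {V : Type*} {G : SimpleGraph V} {a b : V} (hab : a ≠ b) {X Y : Set V}
    (hX : Conn (addE G a b) X) (hY : Conn G Y) (ha : a ∈ Y) (hb : b ∈ Y)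
    (hc : a ∈ X ∨ b ∈ X) : Conn G (X ∪ Y) := by
  refine ⟨hY.1.inr, fun f hf => ?_⟩
  have h2 := hY.2 f fun x hx y hy => hf x (Or.inr hx) y (Or.inr hy)
  have h1 := hX.2 f fun x hx y hy hxy => by
    obtain h | ⟨rfl, rfl⟩ | ⟨rfl, rfl⟩ := (addE_adj G hab x y).1 hxy
    · exact hf x (Or.inl hx) y (Or.inl hy) h
    · exact h2 _ ha _ hb
    · exact h2 _ hb _ ha
  obtain ⟨c, hcX, hcY⟩ : ∃ c, c ∈ X ∧ c ∈ Y := by grind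
  intro u hu v hv
  have a1 : f u → f c := hu.elim (fun h => h1 u h c hcX) (fun h => h2 u h c hcY)
  have a2 : f c → f v := hv.elim (fun h => h1 c hcX v h) (fun h => h2 c hcY v h)
  exact fun h => a2 (a1 h)

/-! ### Separating pairs -/

/-- `{a, b}` is a nonadjacent pair separating `G` into the sides `A` and `B`, both containing the
pair. Equivalently, `G` is the collision of `G[A] + ab` and `G[B] + ab` along `ab`. The vertex sets
`A \ B` and `B \ A` are allowed to be empty. -/
structure Sep {V : Type*} (G : SimpleGraph V) (a b : V) (A B : Set V) : Prop where
  ne : a ≠ b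
  not_adj : ¬ G.Adj a b
  union : A ∪ B = Set.univ
  inter : A ∩ B = {a, b}
  cut : ∀ x ∈ A, ∀ y ∈ B, G.Adj x y → y ∈ A ∨ x ∈ B

namespace Sep

variable {V : Type*} {G : SimpleGraph V} {a b : V} {A B : Set V}

theorem symm (h : Sep G a b A B) : Sep G a b B A :=
  ⟨h.ne, h.not_adj, by rw [Set.union_comm, h.union], by rw [Set.inter_comm, h.inter],
    fun x hx y hy hxy => (h.cut y hy x hx hxy.symm).symm⟩

theorem mem_or (h : Sep G a b A B) (x : V) : x ∈ A ∨ x ∈ B := h.union.symm.subset (Set.mem_univ x)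

theorem mem_both (h : Sep G a b A B) (x : V) : x ∈ A ∧ x ∈ B ↔ x = a ∨ x = b := by
  have := Set.ext_iff.1 h.inter x
  simpa using this

theorem aA (h : Sep G a b A B) : a ∈ A := ((h.mem_both a).2 (Or.inl rfl)).1
theorem aB (h : Sep G a b A B) : a ∈ B := h.symm.aA
theorem bA (h : Sep G a b A B) : b ∈ A := ((h.mem_both b).2 (Or.inr rfl)).1
theorem bB (h : Sep G a b A B) : b ∈ B := h.symm.bA

/-- If `X ⊆ A` is connected together with the far side `B \ A`, then it is connected after adding
`ab`: an excursion to `B \ A` enters and leaves through `a` and `b`. -/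
theorem conn_left (h : Sep G a b A B) {X : Set V} (hXA : X ⊆ A) (hX : a ∈ X ∨ b ∈ X)
    (hc : Conn G (X ∪ B \ A)) : Conn (addE G a b) X := by
  refine ⟨by grind [Set.Nonempty], fun f hf u hu v hv hfu => ?_⟩
  have hf' : ∀ x ∈ X, ∀ y ∈ X, (x = a ∨ x = b) → (y = a ∨ y = b) → f x → f y := by
    intro x hx y hy hx' hy' hfx
    by_cases hxy : x = y
    · exact hxy ▸ hfx
    · refine hf x hx y hy ((addE_adj G h.ne x y).2 (Or.inr ?_)) hfx
      grind
  have := hc.2 (fun x => (x ∈ A ∧ f x) ∨ (x ∉ A ∧ ∃ y ∈ X, (y = a ∨ y = b) ∧ f y)) (by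
    rintro x (hx | hx) y (hy | hy) hxy
    · rintro (⟨-, h1⟩ | ⟨h1, -⟩)
      · exact Or.inl ⟨hXA hy, hf x hx y hy (le_addE G a b hxy) h1⟩
      · exact absurd (hXA hx) h1
    · rintro (⟨-, h1⟩ | ⟨h1, -⟩)
      · have := h.cut x (hXA hx) y hy.1 hxy
        have := h.mem_both x
        exact Or.inr ⟨hy.2, x, hx, by grind, h1⟩
      · exact absurd (hXA hx) h1
    · rintro (⟨h1, -⟩ | ⟨-, z, hz, hz', hfz⟩)
      · exact absurd h1 hx.2
      · have := h.cut y (hXA hy) x hx.1 hxy.symm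
        have := h.mem_both y
        exact Or.inl ⟨hXA hy, hf' z hz y hy hz' (by grind) hfz⟩
    · rintro (⟨h1, -⟩ | ⟨-, h1⟩)
      · exact absurd h1 hx.2
      · exact Or.inr ⟨hy.2, h1⟩) u (Or.inl hu) v (Or.inl hv) (Or.inl ⟨hXA hu, hfu⟩)
  obtain h1 | h1 := this
  · exact h1.2
  · exact absurd (hXA hv) h1.1

/-- Replacing `T ⊆ A` by `T ∪ B` adds `|E(B)|` edges and `|B| - 2` vertices when `a, b ∈ T`. -/
theorem eN_union [Finite V] (h : Sep G a b A B) {T : Set V} (hT : T ⊆ A) (ha : a ∈ T) (hb : b ∈ T) :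
    eN G T + eN G B = eN G (T ∪ B) ∧ T.ncard + B.ncard = (T ∪ B).ncard + 2 := by
  have hi : T ∩ B = {a, b} := by
    ext x
    have := h.mem_both x
    have := @hT x
    simp
    grind
  have h1 := eN_add (G := G) (A := T) (B := B) (by
    intro u hu v hv huv
    have := h.cut u (hT hu) v hv huv
    have := h.mem_both v
    grind)
  have h2 := Set.ncard_union_add_ncard_inter T B
  rw [hi, Set.ncard_pair h.ne] at h2
  rw [hi, eN_pair h.ne, if_neg h.not_adj] at h1
  omega

/-- A connected set avoiding `a` and `b` lies on one side. -/
theorem subset_or (h : Sep G a b A B) {X : Set V} (hX : Conn G X) (ha : a ∉ X) (hb : b ∉ X) :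
    X ⊆ A ∨ X ⊆ B := by
  by_contra hcon
  obtain ⟨⟨x, hx, hxA⟩, ⟨y, hy, hyB⟩⟩ : (∃ x ∈ X, x ∉ A) ∧ (∃ y ∈ X, y ∉ B) := by
    simpa only [not_or, Set.not_subset] using hcon
  refine hxA (hX.2 (· ∈ A) (fun u hu v hv huv hA => ?_) y hy x hx ?_)
  · have := h.mem_both u
    have := h.mem_or v
    have := h.cut u hA v
    grind
  · have := h.mem_or y
    tauto

/-- A `2`-connected graph with at least three vertices stays connected after deletion of the edge
`ab`: glue `X - a` and `X - b` at a third vertex. -/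
theorem conn_of_addE [Finite V] (hab : a ≠ b) {X : Set V} (h : TwoConn (addE G a b) X)
    (h3 : 3 ≤ X.ncard) (ha : a ∈ X) (hb : b ∈ X) : Conn G X := by
  obtain ⟨d, hd, hd'⟩ := Set.exists_mem_notMem_of_ncard_lt_ncard (s := {a, b}) (t := X)
    (by rw [Set.ncard_pair hab]; omega)
  have h1 := (conn_congr (addE_congr G hab (X := X \ {a}) (by grind))).2 (h.2 a ha)
  have h2 := (conn_congr (addE_congr G hab (X := X \ {b}) (by grind))).2 (h.2 b hb)
  convert h1.union h2 (c := d) (by grind) (by grind) using 1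
  grind

/-- A single edge violates `|E| = 2(|V| - 1)`, so each side has a third vertex. -/
theorem three_le [Finite V] (h : Sep G a b A B) (hA : SpadeOn (addE G a b) A) : 3 ≤ A.ncard := by
  by_contra hlt
  have h2 := hA.1.two_le
  have : A = {a, b} := by
    refine (Set.eq_of_subset_of_ncard_le ?_ ?_).symm
    · have := h.aA; have := h.bA; grind
    · rw [Set.ncard_pair h.ne]; omega
  have h3 := hA.2.1
  rw [eN_addE h.ne h.not_adj h.aA h.bA, this, eN_pair h.ne, if_neg h.not_adj,
    Set.ncard_pair h.ne] at h3
  omega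

/-- The (♠)₂ equality for a good flat `S` of the collision located on the side `A`: either `S`
misses `a` or `b`, and then `S` is a good flat of `G[A] + ab`, or `S` contains `B`, and then
`S ∩ A` is a good flat of `G[A] + ab`. -/
theorem spade_aux [Finite V] (h : Sep G a b A B) (hA : SpadeOn (addE G a b) A)
    (hB : SpadeOn (addE G a b) B) {S : Set V} (hS : TwoConn G S) (hSc : Conn G Sᶜ)
    (h1 : a ∈ S → b ∈ S → Sᶜ ⊆ A) (h2 : ¬ (a ∈ S ∧ b ∈ S) → S ⊆ A) :
    eN G S + 3 = 2 * S.ncard := by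
  by_cases hab : a ∈ S ∧ b ∈ S
  · obtain ⟨ha, hb⟩ := hab
    have hSA := h1 ha hb
    have hBS : B ⊆ S := fun x hx => by
      by_contra hxS
      have := (h.mem_both x).1 ⟨hSA hxS, hx⟩
      grind
    have hu : S ∩ A ∪ B = S := by
      ext x; have := h.mem_or x; have := @hBS x; simp; tauto
    have haA := h.aA
    have hbA := h.bA
    have hT : TwoConn (addE G a b) (S ∩ A) := by
      refine ⟨h.conn_left Set.inter_subset_right (Or.inl ⟨ha, haA⟩) ?_, fun v hv =>
        h.conn_left (Set.sdiff_subset.trans Set.inter_subset_right) ?_ ?_⟩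
      · convert hS.1 using 1
        ext x; have := h.mem_or x; have := @hBS x; simp; tauto
      · have := h.ne; grind
      · convert hS.2 v hv.1 using 1
        ext x; have := h.mem_or x; have := @hBS x; have := hv.2; simp; grind
    have hc : Conn (addE G a b) (A \ (S ∩ A)) := by
      rw [show A \ (S ∩ A) = Sᶜ by ext x; have := @hSA x; simp at this ⊢; tauto]
      exact hSc.mono (le_addE G a b)
    have e1 := hA.2.2 _ Set.inter_subset_right hT hc
    have e2 := hB.2.1
    rw [eN_addE h.ne h.not_adj h.aB h.bB] at e2
    rw [eN_addE (S := S ∩ A) h.ne h.not_adj ⟨ha, haA⟩ ⟨hb, hbA⟩] at e1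
    have := h.eN_union Set.inter_subset_right (T := S ∩ A) ⟨ha, haA⟩ ⟨hb, hbA⟩
    rw [hu] at this
    omega
  · have hSA := h2 hab
    rw [eN_congr (addE_congr G h.ne hab)]
    refine hA.2.2 S hSA (hS.mono (le_addE G a b)) (h.conn_left Set.sdiff_subset ?_ ?_)
    · have := h.aA
      have := h.bA
      grind
    · convert hSc using 1
      ext x; have := h.mem_or x; have := @hSA x; simp; tauto

/-- A collision of two graphs satisfying (♠)₂ satisfies (♠)₂. -/
theorem spade [Finite V] (h : Sep G a b A B) (hA : SpadeOn (addE G a b) A)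
    (hB : SpadeOn (addE G a b) B) : SpadeOn G Set.univ := by
  have cA := conn_of_addE h.ne hA.1 (h.three_le hA) h.aA h.bA
  have cB := conn_of_addE h.ne hB.1 (h.symm.three_le hB) h.aB h.bB
  have haA := h.aA
  have hbA := h.bA
  have haB := h.aB
  have hbB := h.bB
  have hne := h.ne
  refine ⟨⟨?_, fun v _ => ?_⟩, ?_, fun S _ hS hSc => ?_⟩
  · rw [← h.union]; exact cA.union cB haA haB
  · by_cases hv : v ∈ A ∧ v ∈ B
    · have hv' := (h.mem_both v).1 hv
      have h1 := (conn_congr (addE_congr G h.ne (X := A \ {v}) (by grind))).2 (hA.1.2 v hv.1)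
      have h2 := (conn_congr (addE_congr G h.ne (X := B \ {v}) (by grind))).2 (hB.1.2 v hv.2)
      rw [← h.union, Set.union_sdiff_distrib]
      obtain rfl | rfl := hv'
      · exact h1.union h2 (c := b) (by grind) (by grind)
      · exact h1.union h2 (c := a) (by grind) (by grind)
    · by_cases hvA : v ∈ A
      · convert (hA.1.2 v hvA).union' h.ne cB haB hbB (by grind) using 1
        ext x; have := h.mem_or x; simp; grind
      · have hvB := (h.mem_or v).resolve_left hvA
        convert (hB.1.2 v hvB).union' h.ne cA haA hbA (by grind) using 1
        ext x; have := h.mem_or x; simp; grind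
  · have e1 := hA.2.1
    have e2 := hB.2.1
    rw [eN_addE h.ne h.not_adj haA hbA] at e1
    rw [eN_addE h.ne h.not_adj haB hbB] at e2
    have := h.eN_union subset_rfl haA hbA
    rw [h.union] at this
    omega
  · rw [← Set.compl_eq_univ_sdiff] at hSc
    -- A connected set avoiding `a` and `b` lies on one side: use `Sᶜ` if `a, b ∈ S`, and otherwise
    -- `S` without the at most one vertex it shares with `{a, b}`.
    have key : (a ∈ S → b ∈ S → Sᶜ ⊆ A) ∧ (¬ (a ∈ S ∧ b ∈ S) → S ⊆ A) ∨
        (a ∈ S → b ∈ S → Sᶜ ⊆ B) ∧ (¬ (a ∈ S ∧ b ∈ S) → S ⊆ B) := by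
      by_cases hab : a ∈ S ∧ b ∈ S
      · have := h.subset_or hSc (by simpa using hab.1) (by simpa using hab.2)
        tauto
      · suffices S ⊆ A ∨ S ⊆ B by tauto
        have aux : ∀ c, (c = a ∨ c = b) → (S \ {c} ⊆ A ∨ S \ {c} ⊆ B) → S ⊆ A ∨ S ⊆ B := by
          intro c hc hs
          refine hs.imp (fun hs x hx => ?_) (fun hs x hx => ?_)
          all_goals
            by_cases hxc : x = c
            · grind
            · exact hs ⟨hx, hxc⟩
        by_cases ha : a ∈ S
        · exact aux a (Or.inl rfl) (h.subset_or (hS.2 a ha) (by simp) (by grind))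
        · by_cases hb : b ∈ S
          · exact aux b (Or.inr rfl) (h.subset_or (hS.2 b hb) (by grind) (by simp))
          · exact h.subset_or hS.1 ha hb
    obtain ⟨k1, k2⟩ | ⟨k1, k2⟩ := key
    · exact h.spade_aux hA hB hS hSc k1 k2
    · exact h.symm.spade_aux hB hA hS hSc k1 k2

/-- Conversely, (♠)₂ passes to a side of the separation when both sides are `2`-connected with
`|E(A)| = 2|A| - 3` and `|E(B)| = 2|B| - 3`: a good flat `S` of `G[A] + ab` is a good flat of `G` if
it misses `a` or `b`, and otherwise `S ∪ B` is one. -/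
theorem spade_left [Finite V] (h : Sep G a b A B) (hG : SpadeOn G Set.univ) (hA : TwoConn G A)
    (hB : TwoConn G B) (eA : eN G A + 3 = 2 * A.ncard) (eB : eN G B + 3 = 2 * B.ncard) :
    SpadeOn (addE G a b) A := by
  have haA := h.aA
  have hbA := h.bA
  have haB := h.aB
  have hbB := h.bB
  have hne := h.ne
  refine ⟨hA.mono (le_addE G a b), ?_, fun S hSA hS hSc => ?_⟩
  · rw [eN_addE h.ne h.not_adj h.aA h.bA]; omega
  by_cases hab : a ∈ S ∧ b ∈ S
  · obtain ⟨ha, hb⟩ := hab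
    have h2 : TwoConn G (S ∪ B) := by
      refine ⟨hS.1.union' h.ne hB.1 haB hbB (Or.inl ha), fun v hv => ?_⟩
      rw [Set.union_sdiff_distrib]
      by_cases hv' : v ∈ S ∧ v ∈ B
      · have hv'' := (h.mem_both v).1 ⟨hSA hv'.1, hv'.2⟩
        have h1 := (conn_congr (addE_congr G h.ne (X := S \ {v}) (by grind))).2 (hS.2 v hv'.1)
        have h2 := hB.2 v hv'.2
        obtain rfl | rfl := hv''
        · exact h1.union h2 (c := b) (by grind) (by grind)
        · exact h1.union h2 (c := a) (by grind) (by grind)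
      · by_cases hvS : v ∈ S
        · have hvB : v ∉ B := fun h => hv' ⟨hvS, h⟩
          rw [Set.sdiff_singleton_eq_self hvB]
          exact (hS.2 v hvS).union' h.ne hB.1 haB hbB (by grind)
        · rw [Set.sdiff_singleton_eq_self hvS]
          have hvB : v ∈ B := hv.resolve_left hvS
          exact hS.1.union' h.ne (hB.2 v hvB) (by grind) (by grind) (Or.inl ha)
    have e := hG.2.2 (S ∪ B) (Set.subset_univ _) h2 (by
      convert (conn_congr (addE_congr G h.ne (X := A \ S) (by grind))).2 hSc using 1
      ext x; have := h.mem_or x; have := h.mem_both x; simp; grind)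
    have := h.eN_union hSA ha hb
    rw [eN_addE h.ne h.not_adj ha hb]
    omega
  · have hcongr := addE_congr G h.ne hab
    rw [← eN_congr hcongr]
    refine hG.2.2 S (Set.subset_univ _) ((twoConn_congr hcongr).2 hS) ?_
    by_cases hab' : a ∉ S ∧ b ∉ S
    · convert hSc.union' h.ne hB.1 haB hbB (by grind) using 1
      ext x; have := h.mem_or x; have := h.mem_both x; have := @hSA x; simp; grind
    · have hc' := (conn_congr (addE_congr G h.ne (X := A \ S) (by grind))).2 hSc
      by_cases ha : a ∈ S
      · convert hc'.union (hB.2 a haB) (c := b) (by grind) (by grind) using 1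
        ext x; have := h.mem_or x; have := h.mem_both x; have := @hSA x; simp; grind
      · convert hc'.union (hB.2 b hbB) (c := a) (by grind) (by grind) using 1
        ext x; have := h.mem_or x; have := h.mem_both x; have := @hSA x; simp; grind

end Sep

/-! ### The graph `K₄` and the `3`-connected case -/

theorem eN_univ {V : Type*} {G : SimpleGraph V} : eN G Set.univ = G.edgeSet.ncard := by
  rw [eN]; congr 1; ext; simp [edgesIn]

theorem eN_top {V : Type*} [Finite V] (S : Set V) :
    eN (⊤ : SimpleGraph V) S = S.ncard.choose 2 := by
  classical
  have := Fintype.ofFinite S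
  have h := eN_image (G := (⊤ : SimpleGraph S)) (H := (⊤ : SimpleGraph V)) Subtype.val
    Subtype.val_injective (by simp [Subtype.ext_iff]) Set.univ
  rw [Set.image_univ, Subtype.range_coe] at h
  rw [h, eN_univ, ← coe_edgeFinset, Set.ncard_coe_finset, card_edgeFinset_top_eq_card_choose_two,
    ← Nat.card_eq_fintype_card, Nat.card_coe_set_eq]

theorem spadeOn_top : SpadeOn (⊤ : SimpleGraph (Fin 4)) Set.univ := by
  have hc : ∀ X : Set (Fin 4), X.Nonempty → Conn ⊤ X := by
    refine fun X hX => ⟨hX, fun f hf u hu v hv hfu => ?_⟩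
    by_cases huv : u = v
    · exact huv ▸ hfu
    · exact hf u hu v hv huv hfu
  refine ⟨⟨hc _ Set.univ_nonempty, fun v _ => hc _ ?_⟩, ?_, fun S _ hS hSc => ?_⟩
  · obtain ⟨w, hw⟩ := exists_ne v
    exact ⟨w, trivial, hw⟩
  · rw [eN_top, Set.ncard_univ, Nat.card_fin]; rfl
  · have h2 := hS.two_le
    rw [← Set.compl_eq_univ_sdiff] at hSc
    have h3 := Set.ncard_add_ncard_compl S
    have h4 := (Set.ncard_pos (Set.toFinite _)).2 hSc.1
    rw [Nat.card_fin] at h3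
    rw [eN_top]
    obtain h | h : S.ncard = 2 ∨ S.ncard = 3 := by omega
    all_goals rw [h]; rfl

theorem spade2_of_iso {V : Type*} {G : SimpleGraph V} (e : G ≃g (⊤ : SimpleGraph (Fin 4))) :
    Spade2 G := by
  have : Finite V := Finite.of_equiv _ e.toEquiv.symm
  rw [spade2_iff (H := ⊤) e e.injective (fun _ _ => e.map_adj_iff), e.surjective.range_eq]
  exact spadeOn_top

/-- If no pair of vertices separates `G`, every vertex complement is a good flat, so all degrees
are `3`. Then `3n = 2|E| = 4(n - 1)` gives `n = 4`. -/
theorem iso_of_threeConn {V : Type*} [Finite V] {G : SimpleGraph V} (hG : SpadeOn G Set.univ)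
    (h : ∀ a b, a ≠ b → Conn G {a, b}ᶜ) : Nonempty (G ≃g (⊤ : SimpleGraph (Fin 4))) := by
  classical
  have := Fintype.ofFinite V
  have hn := hG.2.1
  have h2 := hG.1.two_le
  rw [eN_univ, Set.ncard_univ] at hn
  rw [Set.ncard_univ] at h2
  have hdeg : ∀ v, G.degree v = 3 := by
    intro v
    have h1 := hG.2.2 (Set.univ \ {v}) (Set.subset_univ _) ⟨hG.1.2 v trivial, fun w hw => by
      convert h v w (fun h => hw.2 h.symm) using 1
      ext; simp⟩ (by
        have : Set.univ \ (Set.univ \ {v}) = {v} := by simp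
        rw [this]
        exact ⟨by simp, by simp⟩)
    have hc : (Set.univ \ {v}).ncard + 1 = Nat.card V := by
      rw [Set.ncard_sdiff_singleton_add_one (Set.mem_univ v), Set.ncard_univ]
    have hi : edgesIn G (Set.univ \ {v}) = G.edgeSet \ G.incidenceSet v := by
      ext e
      simp [edgesIn, incidenceSet]
      grind
    have h3 := Set.ncard_sdiff_add_ncard_of_subset (G.incidenceSet_subset v) (Set.toFinite _)
    rw [← hi, ← coe_incidenceFinset, Set.ncard_coe_finset, card_incidenceFinset_eq_degree] at h3
    rw [eN] at h1
    omega
  have hs := G.sum_degrees_eq_twice_card_edges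
  simp only [hdeg, Finset.sum_const, Finset.card_univ, smul_eq_mul] at hs
  rw [← coe_edgeFinset, Set.ncard_coe_finset, Nat.card_eq_fintype_card] at hn
  have h4 : Fintype.card V = 4 := by omega
  have htop : G = ⊤ := by
    refine eq_top_iff.2 fun u v huv => ?_
    have : insert u (G.neighborFinset u) = Finset.univ := by
      rw [← Finset.card_eq_iff_eq_univ, Finset.card_insert_of_notMem (by simp),
        card_neighborFinset_eq_degree, hdeg, h4]
    have := this.symm.subset (Finset.mem_univ v)
    simp at this
    exact this.resolve_left (fun h => huv h.symm)
  subst htop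
  exact ⟨Iso.completeGraph (Fintype.equivFinOfCardEq h4)⟩

/-! ### Collisions and (♠)₂ -/

/-- A separating pair `a, b` of a graph with (♠)₂ is nonadjacent, and `G` is a collision of two
smaller graphs with (♠)₂. For the sides `A`, `B` one has
`|E(A)| + |E(B)| = |E| + |E({a, b})| = 2|A| + 2|B| - 6 + |E({a, b})|`, so `sparse` forces
`|E({a, b})| = 0` and equality for `A` and `B`. -/
theorem exists_sep {V : Type*} [Finite V] {G : SimpleGraph V} (hG : SpadeOn G Set.univ) {a b : V}
    (hab : a ≠ b) (h : ¬ Conn G {a, b}ᶜ) : ∃ A B, Sep G a b A B ∧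
      SpadeOn (addE G a b) A ∧ SpadeOn (addE G a b) B ∧ A ≠ Set.univ ∧ B ≠ Set.univ := by
  have hn := hG.2.1
  have hne : ({a, b}ᶜ : Set V).Nonempty := by
    by_contra hcon
    rw [Set.not_nonempty_iff_eq_empty, Set.compl_empty_iff] at hcon
    rw [← hcon, eN_pair hab, Set.ncard_pair hab] at hn
    split_ifs at hn
    all_goals omega
  obtain ⟨C, D, ⟨c, hc⟩, ⟨d, hd⟩, hCD, hdis, hno⟩ := exists_split hne h
  have hmem (x) : x ∈ C ∨ x ∈ D ↔ x ≠ a ∧ x ≠ b := by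
    have := Set.ext_iff.1 hCD x
    simpa using this
  have hd' (x) : x ∈ C → x ∉ D := fun h => Set.disjoint_left.1 hdis h
  have hu : ({a, b} ∪ C) ∪ ({a, b} ∪ D) = Set.univ := by
    ext x; have := hmem x; simp; tauto
  have hi : ({a, b} ∪ C) ∩ ({a, b} ∪ D) = {a, b} := by
    ext x; have := hd' x; simp; tauto
  have hcut : ∀ x ∈ {a, b} ∪ C, ∀ y ∈ {a, b} ∪ D, G.Adj x y →
      y ∈ {a, b} ∪ C ∨ x ∈ {a, b} ∪ D := by
    intro x hx y hy hxy
    have := hno x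
    grind
  have hA : {a, b} ∪ C ≠ Set.univ := fun h => by
    have := hmem d; have := hd' d; have := h.symm.subset (Set.mem_univ d); grind
  have hB : {a, b} ∪ D ≠ Set.univ := fun h => by
    have := hmem c; have := hd' c; have := h.symm.subset (Set.mem_univ c); grind
  have h2 (X : Set V) : 2 ≤ ({a, b} ∪ X).ncard := by
    rw [← Set.ncard_pair hab]
    exact Set.ncard_le_ncard Set.subset_union_left (Set.toFinite _)
  obtain ⟨a1, a2⟩ := sparse hG _ _ rfl hA (h2 C)
  obtain ⟨b1, b2⟩ := sparse hG _ _ rfl hB (h2 D)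
  have e1 := eN_add hcut
  have e2 := Set.ncard_union_add_ncard_inter ({a, b} ∪ C) ({a, b} ∪ D)
  rw [hu, hi] at e1 e2
  rw [Set.ncard_pair hab] at e2
  rw [eN_pair hab] at e1
  split_ifs at e1 with hadj
  · omega
  have hs : Sep G a b _ _ := ⟨hab, hadj, hu, hi, hcut⟩
  have eA : eN G ({a, b} ∪ C) + 3 = 2 * ({a, b} ∪ C).ncard := by omega
  have eB : eN G ({a, b} ∪ D) + 3 = 2 * ({a, b} ∪ D).ncard := by omega
  exact ⟨_, _, hs, hs.spade_left hG (a2 eA).1 (b2 eB).1 eA eB,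
    hs.symm.spade_left hG (b2 eB).1 (a2 eA).1 eB eA, hA, hB⟩

theorem Sep.isCollision {V : Type*} {G : SimpleGraph V} {a b : V} {A B : Set V}
    (h : Sep G a b A B) : IsCollision ((addE G a b).induce A) ((addE G a b).induce B)
      s(⟨a, h.aA⟩, ⟨b, h.bA⟩) s(⟨a, h.aB⟩, ⟨b, h.bB⟩) G a b := by
  refine ⟨h.ne, h.not_adj, Subtype.val, Subtype.val, Subtype.val_injective, Subtype.val_injective,
    rfl, rfl, by simpa using h.mem_or, by simpa using h.inter, fun x y => ?_⟩
  have hne := h.ne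
  have hna := h.not_adj
  have := G.adj_comm a b
  simp only [comap_adj, Function.Embedding.subtype_apply, addE_adj G h.ne, Subtype.exists,
    exists_and_left, exists_prop, Sym2.eq_iff, Subtype.mk.injEq, ne_eq]
  have := h.mem_or x
  have := h.mem_or y
  have := h.cut x
  have := h.cut y
  have := G.adj_comm x y
  grind

/-- Strong induction on the number of vertices: split along a separating pair, if there is one. -/
theorem obtainable_of_spade (n : ℕ) : ∀ (W : Type) (G : SimpleGraph W), Finite W →
    Nat.card W = n → Spade2 G → ObtainableK4 G := by
  induction n using Nat.strong_induction_on with | _ n ih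
  intro W G _ hn hG
  rw [spade2_iff (H := G) id Function.injective_id (fun _ _ => Iff.rfl), Set.range_id] at hG
  by_cases h : ∀ a b, a ≠ b → Conn G {a, b}ᶜ
  · obtain ⟨e⟩ := iso_of_threeConn hG h
    exact .k4 G e
  push Not at h
  obtain ⟨a, b, hab, h⟩ := h
  obtain ⟨A, B, hs, hA, hB, nA, nB⟩ := exists_sep hG hab h
  have key (X : Set W) (hX : SpadeOn (addE G a b) X) (nX : X ≠ Set.univ) :
      ObtainableK4 ((addE G a b).induce X) := by
    refine ih (Nat.card X) ?_ X _ inferInstance rfl ?_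
    · rw [Nat.card_coe_set_eq, ← hn, ← Set.ncard_univ]
      exact Set.ncard_lt_ncard (Set.ssubset_univ_iff.2 nX) (Set.toFinite _)
    · rw [spade2_iff (H := addE G a b) Subtype.val Subtype.val_injective (fun _ _ => Iff.rfl),
        Subtype.range_coe]
      exact hX
  refine .collide _ _ _ _ G a b (key A hA nA) (key B hB nB) ?_ ?_ hs.isCollision
  all_goals simp [addE_adj G hab]

/-- Adding back the identified edge of a collision restores each of the two graphs as an induced
subgraph. -/
theorem collide_adj {V₁ V₂ W : Type*} {G₁ : SimpleGraph V₁} {G₂ : SimpleGraph V₂}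
    {e₁ : Sym2 V₁} {e₂ : Sym2 V₂} {G : SimpleGraph W} {a b : W} (hab : a ≠ b)
    (he₁ : e₁ ∈ G₁.edgeSet) {φ₁ : V₁ → W} {φ₂ : V₂ → W} (i₁ : Function.Injective φ₁)
    (m₁ : Sym2.map φ₁ e₁ = s(a, b)) (m₂ : Sym2.map φ₂ e₂ = s(a, b))
    (i₂ : Function.Injective φ₂) (hr : Set.range φ₁ ∩ Set.range φ₂ = {a, b})
    (hadj : ∀ x y : W, G.Adj x y ↔
      ((∃ u v, G₁.Adj u v ∧ s(u, v) ≠ e₁ ∧ φ₁ u = x ∧ φ₁ v = y) ∨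
       (∃ u v, G₂.Adj u v ∧ s(u, v) ≠ e₂ ∧ φ₂ u = x ∧ φ₂ v = y))) (u v : V₁) :
    (addE G a b).Adj (φ₁ u) (φ₁ v) ↔ G₁.Adj u v := by
  have hk : s(φ₁ u, φ₁ v) = s(a, b) ↔ s(u, v) = e₁ := by
    rw [← m₁, ← Sym2.map_mk, (Sym2.map.injective i₁).eq_iff]
  rw [addE_adj G hab, ← Sym2.eq_iff, hk, hadj]
  constructor
  · rintro ((⟨u', v', h, -, h1, h2⟩ | ⟨u', v', h, hne, h1, h2⟩) | h)
    · rwa [← i₁ h1, ← i₁ h2]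
    · exfalso
      have hu : φ₁ u ∈ Set.range φ₁ ∩ Set.range φ₂ := ⟨⟨u, rfl⟩, ⟨u', h1⟩⟩
      have hv : φ₁ v ∈ Set.range φ₁ ∩ Set.range φ₂ := ⟨⟨v, rfl⟩, ⟨v', h2⟩⟩
      have hne' : φ₂ u' ≠ φ₂ v' := fun h' => h.ne (i₂ h')
      refine hne (Sym2.map.injective i₂ ?_)
      rw [m₂, Sym2.map_mk, Sym2.eq_iff]
      rw [hr] at hu hv
      simp at hu hv
      grind
    · rw [← h] at he₁
      exact he₁
  · intro h
    by_cases he : s(u, v) = e₁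
    · exact Or.inr he
    · exact Or.inl (Or.inl ⟨u, v, h, he, rfl, rfl⟩)

theorem spade_of_obtainable {W : Type} {G : SimpleGraph W} (h : ObtainableK4 G) :
    Finite W ∧ Spade2 G := by
  induction h with
  | k4 G e => exact ⟨Finite.of_equiv _ e.toEquiv.symm, spade2_of_iso e⟩
  | @collide V₁ V₂ W G₁ G₂ e₁ e₂ G a b _ _ he₁ he₂ hc ih₁ ih₂ =>
    obtain ⟨hab, hna, φ₁, φ₂, i₁, i₂, m₁, m₂, hu, hr, hadj⟩ := hc
    obtain ⟨f₁, s₁⟩ := ih₁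
    obtain ⟨f₂, s₂⟩ := ih₂
    have hW : Finite W := by
      rw [← Set.finite_univ_iff]
      refine ((Set.finite_range φ₁).union (Set.finite_range φ₂)).subset fun x _ => hu x
    rw [spade2_iff (H := addE G a b) φ₁ i₁
      (collide_adj hab he₁ i₁ m₁ m₂ i₂ hr hadj)] at s₁
    rw [spade2_iff (H := addE G a b) φ₂ i₂
      (collide_adj hab he₂ i₂ m₂ m₁ i₁ (by rw [Set.inter_comm, hr])
        (fun x y => (hadj x y).trans Or.comm))] at s₂
    refine ⟨hW, ?_⟩
    rw [spade2_iff (H := G) id Function.injective_id (fun _ _ => Iff.rfl), Set.range_id]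
    refine Sep.spade (A := Set.range φ₁) (B := Set.range φ₂)
      ⟨hab, hna, Set.eq_univ_of_forall hu, hr, ?_⟩ s₁ s₂
    intro x _ y _ hxy
    obtain ⟨u, v, -, -, rfl, rfl⟩ | ⟨u, v, -, -, rfl, rfl⟩ := (hadj x y).1 hxy
    · exact Or.inl ⟨v, rfl⟩
    · exact Or.inr ⟨u, rfl⟩

theorem stmt17 {W : Type} [Fintype W] [DecidableEq W] (G : SimpleGraph W)
    (h2c : IsTwoConnected G) :
    Spade2 G ↔ ObtainableK4 G := by
  exact ⟨obtainable_of_spade _ W G inferInstance rfl, fun h => (spade_of_obtainable h).2⟩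

end Gor
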